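/- Let ⋆ be a finite-type star operation on an integral domain R. If M is a ⋆-super potent maximal ⋆-ideal of R, then M is a t-super potent maximal t-ideal of R; consequently, if R is ⋆-super potent, then R is t-super potent. -/

import Mathlib

/-!
Every star operation satisfies `J⋆ ⊆ Jᵛ`, with equality when `J` is `⋆`-invertible. If `⋆` has
finite type, then `A⋆ ⊆ Aᵗ`, so `⋆`-invertible ideals are `t`-invertible, `t`-ideals are `⋆`-ideals
and, by Zorn's lemma, every proper `t`-ideal lies in a maximal `⋆`-ideal. If the maximal `⋆`-ideal
`M` contains a `⋆`-super rigid ideal `I`, then every finitely generated `A ⊆ M` lies in the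
`⋆`-invertible ideal `A + I ⊆ M`, whence `Aᵛ ⊆ (A + I)ᵛ = (A + I)⋆ ⊆ M`; thus `M` is a `t`-ideal,
and a maximal one. Any maximal `t`-ideal containing `I` extends to a maximal `⋆`-ideal containing
`I`, which must be `M`, so `I` is also `t`-super rigid.
-/

open FractionalIdeal

/-- The fractional ideals of `R` inside its field of fractions. -/
abbrev FracId (R : Type*) [CommRing R] : Type _ :=
  FractionalIdeal (nonZeroDivisors R) (FractionRing R)

/-- A star operation on an integral domain `R`: a map on nonzero fractional ideals satisfying
`(cA)⋆ = c·A⋆`, `R⋆ = R`, `A ⊆ A⋆`, monotonicity, and idempotence.  (The value on the zero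
ideal is irrelevant.) -/
structure StarOp (R : Type*) [CommRing R] [IsDomain R] where
  star : FracId R → FracId R
  star_smul : ∀ c : FractionRing R, c ≠ 0 → ∀ I : FracId R, I ≠ 0 →
    star (spanSingleton (nonZeroDivisors R) c * I) = spanSingleton (nonZeroDivisors R) c * star I
  star_one : star 1 = 1
  le_star : ∀ I : FracId R, I ≠ 0 → I ≤ star I
  star_mono : ∀ I J : FracId R, I ≠ 0 → J ≠ 0 → I ≤ J → star I ≤ star J
  star_idem : ∀ I : FracId R, I ≠ 0 → star (star I) = star I

namespace StarOp

variable {R : Type*} [CommRing R] [IsDomain R]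

/-- A star operation has finite type if `A⋆` is the union of `J⋆` over the nonzero finitely
generated (fractional) subideals `J` of `A`. -/
def FiniteType (s : StarOp R) : Prop :=
  ∀ I : FracId R, I ≠ 0 → ∀ x : FractionRing R, (x ∈ s.star I ↔
    ∃ J : FracId R, J ≠ 0 ∧ (J : Submodule R (FractionRing R)).FG ∧ J ≤ I ∧ x ∈ s.star J)

/-- `⋆₁ ≤ ⋆₂` : `I^⋆₁ ⊆ I^⋆₂` for every nonzero fractional ideal `I`. -/
def le (s₁ s₂ : StarOp R) : Prop := ∀ I : FracId R, I ≠ 0 → s₁.star I ≤ s₂.star I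

/-- A (nonzero integral) `⋆`-ideal: an ideal with `I⋆ = I`. -/
def IsStarIdeal (s : StarOp R) (I : Ideal R) : Prop :=
  I ≠ ⊥ ∧ s.star (I : FracId R) = (I : FracId R)

/-- A maximal `⋆`-ideal: maximal among proper integral `⋆`-ideals. -/
def IsMaxStarIdeal (s : StarOp R) (M : Ideal R) : Prop :=
  M ≠ ⊤ ∧ s.IsStarIdeal M ∧ ∀ J : Ideal R, J ≠ ⊤ → s.IsStarIdeal J → M ≤ J → J = M

/-- A nonzero ideal `I` is `⋆`-invertible if `(I·I⁻¹)⋆ = R`. -/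
def IsStarInvertible (s : StarOp R) (I : Ideal R) : Prop :=
  I ≠ ⊥ ∧ s.star ((I : FracId R) * ((1 : FracId R) / (I : FracId R))) = 1

/-- A nonzero finitely generated ideal is `⋆`-rigid if it is contained in exactly one maximal
`⋆`-ideal. -/
def IsRigid (s : StarOp R) (I : Ideal R) : Prop :=
  I ≠ ⊥ ∧ I.FG ∧ ∃! M : Ideal R, s.IsMaxStarIdeal M ∧ I ≤ M

/-- A `⋆`-rigid ideal is `⋆`-super rigid if every finitely generated ideal containing it is
`⋆`-invertible. -/
def IsSuperRigid (s : StarOp R) (I : Ideal R) : Prop :=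
  s.IsRigid I ∧ ∀ J : Ideal R, J.FG → I ≤ J → s.IsStarInvertible J

/-- A maximal `⋆`-ideal is `⋆`-potent if it contains a `⋆`-rigid ideal. -/
def IsPotent (s : StarOp R) (M : Ideal R) : Prop :=
  s.IsMaxStarIdeal M ∧ ∃ I : Ideal R, s.IsRigid I ∧ I ≤ M

/-- A maximal `⋆`-ideal is `⋆`-super potent if it contains a `⋆`-super rigid ideal. -/
def IsSuperPotent (s : StarOp R) (M : Ideal R) : Prop :=
  s.IsMaxStarIdeal M ∧ ∃ I : Ideal R, s.IsSuperRigid I ∧ I ≤ M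

/-- `R` is `⋆`-potent if every maximal `⋆`-ideal is `⋆`-potent. -/
def PotentDomain (s : StarOp R) : Prop :=
  ∀ M : Ideal R, s.IsMaxStarIdeal M → s.IsPotent M

/-- `R` is `⋆`-super potent if every maximal `⋆`-ideal is `⋆`-super potent. -/
def SuperPotentDomain (s : StarOp R) : Prop :=
  ∀ M : Ideal R, s.IsMaxStarIdeal M → s.IsSuperPotent M

end StarOp

section TOperation

variable {R : Type*} [CommRing R] [IsDomain R]

/-- The `v`-operation `J ↦ (J⁻¹)⁻¹` on fractional ideals. -/
noncomputable def vOp (J : FracId R) : FracId R :=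
  (1 : FracId R) / ((1 : FracId R) / J)

/-- The `t`-closure of a fractional ideal: the union of `J^v` over all nonzero finitely
generated subideals `J` (realized as a submodule of the fraction field). -/
noncomputable def tOp (I : FracId R) : Submodule R (FractionRing R) :=
  ⨆ J ∈ {J : FracId R | J ≠ 0 ∧ (J : Submodule R (FractionRing R)).FG ∧ J ≤ I},
    ((vOp J : FracId R) : Submodule R (FractionRing R))

/-- A (nonzero integral) `t`-ideal. -/
def IsTIdeal (I : Ideal R) : Prop :=
  I ≠ ⊥ ∧ tOp (I : FracId R) = ((I : FracId R) : Submodule R (FractionRing R))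

/-- A maximal `t`-ideal: maximal among proper integral `t`-ideals. -/
def IsMaxTIdeal (M : Ideal R) : Prop :=
  M ≠ ⊤ ∧ IsTIdeal M ∧ ∀ J : Ideal R, J ≠ ⊤ → IsTIdeal J → M ≤ J → J = M

/-- A nonzero ideal `I` is `t`-invertible if `(I·I⁻¹)^t = R`. -/
def IsTInvertible (I : Ideal R) : Prop :=
  I ≠ ⊥ ∧ tOp ((I : FracId R) * ((1 : FracId R) / (I : FracId R))) =
    ((1 : FracId R) : Submodule R (FractionRing R))

/-- A nonzero finitely generated ideal is `t`-rigid if it is contained in exactly one maximal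
`t`-ideal. -/
def IsTRigid (I : Ideal R) : Prop :=
  I ≠ ⊥ ∧ I.FG ∧ ∃! M : Ideal R, IsMaxTIdeal M ∧ I ≤ M

/-- A `t`-rigid ideal is `t`-super rigid if every finitely generated ideal containing it is
`t`-invertible. -/
def IsTSuperRigid (I : Ideal R) : Prop :=
  IsTRigid I ∧ ∀ J : Ideal R, J.FG → I ≤ J → IsTInvertible J

/-- A maximal `t`-ideal is `t`-potent if it contains a `t`-rigid ideal. -/
def IsTPotent (M : Ideal R) : Prop :=
  IsMaxTIdeal M ∧ ∃ I : Ideal R, IsTRigid I ∧ I ≤ M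

/-- A maximal `t`-ideal is `t`-super potent if it contains a `t`-super rigid ideal. -/
def IsTSuperPotent (M : Ideal R) : Prop :=
  IsMaxTIdeal M ∧ ∃ I : Ideal R, IsTSuperRigid I ∧ I ≤ M

end TOperation

/-- `R` is `t`-potent if every maximal `t`-ideal is `t`-potent. -/
def TPotentDomain (R : Type*) [CommRing R] [IsDomain R] : Prop :=
  ∀ M : Ideal R, IsMaxTIdeal M → IsTPotent M

/-- `R` is `t`-super potent if every maximal `t`-ideal is `t`-super potent. -/
def TSuperPotentDomain (R : Type*) [CommRing R] [IsDomain R] : Prop :=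
  ∀ M : Ideal R, IsMaxTIdeal M → IsTSuperPotent M

/-- An ideal is invertible if `I·I⁻¹ = R` (as fractional ideals). -/
def IsInvertibleIdeal {R : Type*} [CommRing R] [IsDomain R] (I : Ideal R) : Prop :=
  I ≠ ⊥ ∧ (I : FracId R) * ((1 : FracId R) / (I : FracId R)) = 1

/-- An ideal `M` is `d`-super potent if it contains a nonzero finitely generated ideal `I`
such that every finitely generated ideal containing `I` is invertible. -/
def IsDSuperPotent {R : Type*} [CommRing R] [IsDomain R] (M : Ideal R) : Prop :=
  ∃ I : Ideal R, I ≠ ⊥ ∧ I.FG ∧ I ≤ M ∧ ∀ J : Ideal R, J.FG → I ≤ J → IsInvertibleIdeal J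

/-- An ideal `P` is divided (`P = P R_P`): every `x ∈ P` is divisible, within `P`, by every
`s ∉ P`. -/
def IsDividedIdeal {R : Type*} [CommRing R] (P : Ideal R) : Prop :=
  ∀ x ∈ P, ∀ s ∉ P, ∃ y ∈ P, x = s * y

/-- A divided prime ideal. -/
def IsDividedPrime {R : Type*} [CommRing R] (P : Ideal R) : Prop :=
  P.IsPrime ∧ IsDividedIdeal P

/-- A valuation domain: an integral domain in which, for any two elements, one divides the
other (equivalently, the ideals are totally ordered by inclusion). -/
def IsValuationDomain (A : Type*) [CommRing A] : Prop :=
  IsDomain A ∧ ∀ a b : A, a ∣ b ∨ b ∣ a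

/-- A height-one prime: a nonzero prime ideal such that the only prime strictly below it
is `(0)`. -/
def HeightOnePrime {R : Type*} [CommRing R] (P : Ideal R) : Prop :=
  P.IsPrime ∧ P ≠ ⊥ ∧ ∀ Q : Ideal R, Q.IsPrime → Q < P → Q = ⊥

/-- `R` has `t`-dimension one: every maximal `t`-ideal has height one. -/
def TDimensionOne (R : Type*) [CommRing R] [IsDomain R] : Prop :=
  ∀ M : Ideal R, IsMaxTIdeal M → HeightOnePrime M

/-- `R` is completely integrally closed: if `a ∈ R` is nonzero, `u` is in the fraction field,
and `a·uⁿ ∈ R` for all `n ≥ 1`, then `u ∈ R`. -/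
def CompletelyIntegrallyClosed (R : Type*) [CommRing R] [IsDomain R] : Prop :=
  ∀ (a : R) (u : FractionRing R), a ≠ 0 →
    (∀ n : ℕ, 0 < n → ∃ r : R, algebraMap R (FractionRing R) a * u ^ n =
      algebraMap R (FractionRing R) r) →
    ∃ r : R, algebraMap R (FractionRing R) r = u

/-- A Prüfer `v`-multiplication domain: every nonzero finitely generated ideal is
`t`-invertible. -/
def IsPvMD (R : Type*) [CommRing R] [IsDomain R] : Prop :=
  ∀ I : Ideal R, I ≠ ⊥ → I.FG → IsTInvertible I

/-- `x` (in the fraction field) belongs to the localization `R_P`, i.e. `x = r/s` with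
`s ∉ P`. -/
def MemLocalizationAt {R : Type*} [CommRing R] [IsDomain R] (P : Ideal R)
    (x : FractionRing R) : Prop :=
  ∃ r s : R, s ∉ P ∧ algebraMap R (FractionRing R) s * x = algebraMap R (FractionRing R) r

/-- An essential domain: `R` is an intersection (inside its fraction field) of localizations
at primes which are valuation domains. -/
def EssentialDomain (R : Type*) [CommRing R] [IsDomain R] : Prop :=
  ∃ 𝓟 : Set (Ideal R),
    (∀ P ∈ 𝓟, ∃ hP : P.IsPrime,
      IsValuationDomain (Localization (@Ideal.primeCompl R _ P hP))) ∧
    (∀ x : FractionRing R, (∀ P ∈ 𝓟, MemLocalizationAt P x) ↔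
      ∃ r : R, algebraMap R (FractionRing R) r = x)

/-- A generalized Krull domain: `R` is a locally finite intersection of essential rank-one
(height-one) valuation localizations. -/
def GeneralizedKrullDomain (R : Type*) [CommRing R] [IsDomain R] : Prop :=
  ∃ 𝓟 : Set (Ideal R),
    (∀ P ∈ 𝓟, ∃ hP : P.IsPrime, HeightOnePrime P ∧
      IsValuationDomain (Localization (@Ideal.primeCompl R _ P hP))) ∧
    (∀ x : FractionRing R, (∀ P ∈ 𝓟, MemLocalizationAt P x) ↔
      ∃ r : R, algebraMap R (FractionRing R) r = x) ∧
    (∀ a : R, a ≠ 0 → {P : Ideal R | P ∈ 𝓟 ∧ a ∈ P}.Finite)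

section

open scoped nonZeroDivisors

instance fractionalIdeal_noZeroDivisors {R P : Type*} [CommRing R] [CommRing P] [Algebra R P]
    [NoZeroDivisors P] {S : Submonoid R} : NoZeroDivisors (FractionalIdeal S P) :=
  coeToSubmodule_injective.noZeroDivisors _ coe_zero coe_mul

theorem fractionalIdeal_one_div_ne_zero {R K : Type*} [CommRing R] [IsDomain R] [Field K]
    [Algebra R K] [IsFractionRing R K] {J : FractionalIdeal R⁰ K} (hJ : J ≠ 0) : 1 / J ≠ 0 :=
  right_ne_zero_of_mul (bot_lt_mul_inv hJ).ne'

theorem exists_fg_coeIdeal_eq {R K : Type*} [CommRing R] [CommRing K] [Algebra R K]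
    [IsFractionRing R K] {I : Ideal R} {J : FractionalIdeal R⁰ K}
    (hJ : (J : Submodule R K).FG) (hJI : J ≤ I) :
    ∃ A : Ideal R, A.FG ∧ A ≤ I ∧ (A : FractionalIdeal R⁰ K) = J := by
  obtain ⟨A, rfl⟩ := le_one_iff_exists_coeIdeal.1 (hJI.trans coeIdeal_le_one)
  exact ⟨A, (coeIdeal_fg _ (IsFractionRing.injective R K) A).1 hJ,
    (coeIdeal_le_coeIdeal K).1 hJI, rfl⟩

end

section

variable {R : Type*} [CommRing R] [IsDomain R]

theorem le_vOp (J : FracId R) : J ≤ vOp J := by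
  rcases eq_or_ne J 0 with rfl | hJ
  · exact zero_le _
  · exact (le_div_iff_mul_le (fractionalIdeal_one_div_ne_zero hJ)).2 mul_one_div_le_one

theorem vOp_mul_one_div_le_one (J : FracId R) : vOp J * (1 / J) ≤ 1 :=
  (mul_comm _ _).trans_le mul_one_div_le_one

theorem vOp_mono {I J : FracId R} (hI : I ≠ 0) (hIJ : I ≤ J) : vOp I ≤ vOp J :=
  have hJ : J ≠ 0 := fun h => hI (FractionalIdeal.le_zero_iff.1 (h ▸ hIJ))
  inv_anti_mono (fractionalIdeal_one_div_ne_zero hJ) (fractionalIdeal_one_div_ne_zero hI)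
    (inv_anti_mono hI hJ hIJ)

theorem vOp_one : vOp (1 : FracId R) = 1 := by
  simp only [vOp, FractionalIdeal.div_one]

theorem tOp_le_iff {I : FracId R} {N : Submodule R (FractionRing R)} :
    tOp I ≤ N ↔ ∀ J : FracId R, J ≠ 0 → (J : Submodule R (FractionRing R)).FG → J ≤ I →
      (vOp J : Submodule R (FractionRing R)) ≤ N := by
  simp [tOp, iSup_le_iff]

theorem vOp_le_tOp {I J : FracId R} (hJ : J ≠ 0) (hfg : (J : Submodule R (FractionRing R)).FG)
    (hJI : J ≤ I) : (vOp J : Submodule R (FractionRing R)) ≤ tOp I :=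
  tOp_le_iff.1 le_rfl J hJ hfg hJI

theorem le_tOp (I : FracId R) : (I : Submodule R (FractionRing R)) ≤ tOp I := by
  intro x hx
  rcases eq_or_ne x 0 with rfl | hx0
  · exact zero_mem _
  · have hfg : (spanSingleton (nonZeroDivisors R) x : Submodule R (FractionRing R)).FG := by
      rw [coe_spanSingleton]
      exact Submodule.fg_span_singleton x
    exact vOp_le_tOp (spanSingleton_ne_zero_iff.2 hx0) hfg (spanSingleton_le_iff_mem.2 hx)
      (le_vOp _ (mem_spanSingleton_self _ x))

theorem tOp_le_vOp (I : FracId R) : tOp I ≤ (vOp I : Submodule R (FractionRing R)) :=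
  tOp_le_iff.2 fun _ hJ _ hJI => vOp_mono hJ hJI

theorem isTIdeal_of_forall_fg_vOp_le {I : Ideal R} (hI : I ≠ ⊥)
    (h : ∀ A : Ideal R, A ≠ ⊥ → A.FG → A ≤ I → vOp (A : FracId R) ≤ I) : IsTIdeal I := by
  refine ⟨hI, le_antisymm (tOp_le_iff.2 fun J hJ hfg hJI => ?_) (le_tOp _)⟩
  obtain ⟨A, hA, hAI, rfl⟩ := exists_fg_coeIdeal_eq hfg hJI
  exact h A (coeIdeal_ne_zero.1 hJ) hA hAI

theorem IsMaxTIdeal.eq_of_le {M N : Ideal R} (hN : IsMaxTIdeal N) (hM : IsMaxTIdeal M)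
    (hNM : N ≤ M) : N = M :=
  (hN.2.2 M hM.1 hM.2.1 hNM).symm

end

namespace StarOp

variable {R : Type*} [CommRing R] [IsDomain R] (s : StarOp R)

theorem mul_star_le (I : FracId R) {J : FracId R} (hJ : J ≠ 0) :
    I * s.star J ≤ s.star (I * J) := by
  refine FractionalIdeal.mul_le.2 fun c hc x hx => ?_
  rcases eq_or_ne c 0 with rfl | hc0
  · rw [zero_mul]
    exact zero_mem (s.star (I * J)).coeToSubmodule
  · have hcI : spanSingleton (nonZeroDivisors R) c ≤ I := spanSingleton_le_iff_mem.2 hc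
    have hI : I ≠ 0 := fun h => hc0 ((mem_zero_iff _).1 (h ▸ hc))
    have hcJ : spanSingleton (nonZeroDivisors R) c * s.star J ≤ s.star (I * J) := by
      rw [← s.star_smul c hc0 J hJ]
      exact s.star_mono _ _ (mul_ne_zero (spanSingleton_ne_zero_iff.2 hc0) hJ)
        (mul_ne_zero hI hJ) (mul_le_mul_left hcI J)
    exact hcJ (mem_singleton_mul.2 ⟨x, hx, rfl⟩)

theorem star_le_vOp {J : FracId R} (hJ : J ≠ 0) : s.star J ≤ vOp J := by
  refine (le_div_iff_mul_le (fractionalIdeal_one_div_ne_zero hJ)).2 ?_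
  calc s.star J * (1 / J) = 1 / J * s.star J := mul_comm _ _
    _ ≤ s.star (1 / J * J) := s.mul_star_le _ hJ
    _ ≤ s.star 1 := s.star_mono _ _
        (mul_ne_zero (fractionalIdeal_one_div_ne_zero hJ) hJ) one_ne_zero
        ((mul_comm _ _).trans_le mul_one_div_le_one)
    _ = 1 := s.star_one

theorem star_eq_vOp {J : FracId R} (hJ : J ≠ 0) (hinv : s.star (J * (1 / J)) = 1) :
    s.star J = vOp J := by
  have hJJ : J * (1 / J) ≠ 0 := (bot_lt_mul_inv hJ).ne'
  have hv : vOp J ≠ 0 := fractionalIdeal_one_div_ne_zero (fractionalIdeal_one_div_ne_zero hJ)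
  have hle : vOp J * (J * (1 / J)) ≤ J := by
    rw [mul_left_comm]
    exact mul_le_of_le_one_right' (vOp_mul_one_div_le_one J)
  refine le_antisymm (s.star_le_vOp hJ) ?_
  calc vOp J = vOp J * s.star (J * (1 / J)) := by rw [hinv, mul_one]
    _ ≤ s.star (vOp J * (J * (1 / J))) := s.mul_star_le _ hJJ
    _ ≤ s.star J := s.star_mono _ _ (mul_ne_zero hv hJJ) hJ hle

variable {s}

theorem IsStarIdeal.isTIdeal {M I : Ideal R} (hM : s.IsStarIdeal M) (hI : I.FG) (hIM : I ≤ M)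
    (hinv : ∀ J : Ideal R, J.FG → I ≤ J → J ≤ M → s.IsStarInvertible J) : IsTIdeal M := by
  refine isTIdeal_of_forall_fg_vOp_le hM.1 fun A hA hAfg hAM => ?_
  have hle : A ⊔ I ≤ M := sup_le hAM hIM
  have hAI : s.IsStarInvertible (A ⊔ I) := hinv _ (Submodule.FG.sup hAfg hI) le_sup_right hle
  have hAI0 : ((A ⊔ I : Ideal R) : FracId R) ≠ 0 := coeIdeal_ne_zero.2 hAI.1
  calc vOp (A : FracId R) ≤ vOp ((A ⊔ I : Ideal R) : FracId R) :=
        vOp_mono (coeIdeal_ne_zero.2 hA) ((coeIdeal_le_coeIdeal _).2 le_sup_left)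
    _ = s.star ((A ⊔ I : Ideal R) : FracId R) := (s.star_eq_vOp hAI0 hAI.2).symm
    _ ≤ s.star (M : FracId R) := s.star_mono _ _ hAI0 (coeIdeal_ne_zero.2 hM.1)
        ((coeIdeal_le_coeIdeal _).2 hle)
    _ = M := hM.2

namespace FiniteType

theorem star_le_tOp (hft : s.FiniteType) {I : FracId R} (hI : I ≠ 0) :
    (s.star I : Submodule R (FractionRing R)) ≤ tOp I := by
  intro x hx
  obtain ⟨J, hJ, hfg, hJI, hxJ⟩ := (hft I hI x).1 hx
  exact vOp_le_tOp hJ hfg hJI (s.star_le_vOp hJ hxJ)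

theorem isStarIdeal_of_isTIdeal (hft : s.FiniteType) {N : Ideal R} (hN : IsTIdeal N) :
    s.IsStarIdeal N := by
  have hN0 : (N : FracId R) ≠ 0 := coeIdeal_ne_zero.2 hN.1
  have hle : s.star (N : FracId R) ≤ N :=
    coe_le_coe.1 ((hft.star_le_tOp hN0).trans_eq hN.2)
  exact ⟨hN.1, le_antisymm hle (s.le_star _ hN0)⟩

theorem tOp_eq_one (hft : s.FiniteType) {I : FracId R} (hI : I ≠ 0) (h : s.star I = 1) :
    tOp I = ((1 : FracId R) : Submodule R (FractionRing R)) := by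
  have hI1 : I ≤ 1 := (s.le_star I hI).trans_eq h
  have hv : vOp I ≤ 1 := (vOp_mono hI hI1).trans_eq vOp_one
  exact le_antisymm ((tOp_le_vOp I).trans hv) (h ▸ hft.star_le_tOp hI)

theorem isTInvertible (hft : s.FiniteType) {J : Ideal R} (hJ : s.IsStarInvertible J) :
    IsTInvertible J :=
  ⟨hJ.1, hft.tOp_eq_one (bot_lt_mul_inv (coeIdeal_ne_zero.2 hJ.1)).ne' hJ.2⟩

theorem isStarIdeal_sSup (hft : s.FiniteType) {c : Set (Ideal R)} (hne : c.Nonempty)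
    (hc : DirectedOn (· ≤ ·) c) (h : ∀ N ∈ c, s.IsStarIdeal N) : s.IsStarIdeal (sSup c) := by
  obtain ⟨N, hN⟩ := hne
  have hS : sSup c ≠ ⊥ := ne_bot_of_le_ne_bot (h N hN).1 (le_sSup hN)
  have hS0 : ((sSup c : Ideal R) : FracId R) ≠ 0 := coeIdeal_ne_zero.2 hS
  refine ⟨hS, le_antisymm (fun x hx => ?_) (s.le_star _ hS0)⟩
  obtain ⟨J, hJ, hfg, hJS, hxJ⟩ := (hft _ hS0 x).1 hx
  obtain ⟨A, hA, hAS, rfl⟩ := exists_fg_coeIdeal_eq hfg hJS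
  obtain ⟨L, hL, hAL⟩ := (CompleteLattice.isCompactElement_iff_le_of_directed_sSup_le _ A).1
    ((Submodule.fg_iff_compact A).1 hA) c ⟨N, hN⟩ hc hAS
  have hxL : x ∈ s.star (L : FracId R) :=
    s.star_mono _ _ hJ (coeIdeal_ne_zero.2 (h L hL).1) ((coeIdeal_le_coeIdeal _).2 hAL) hxJ
  rw [(h L hL).2] at hxL
  exact (coeIdeal_le_coeIdeal _).2 (le_sSup hL) hxL

theorem exists_isMaxStarIdeal_ge (hft : s.FiniteType) {N : Ideal R} (hN : N ≠ ⊤)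
    (hNs : s.IsStarIdeal N) : ∃ M, s.IsMaxStarIdeal M ∧ N ≤ M := by
  have hub : ∀ c ⊆ {J : Ideal R | J ≠ ⊤ ∧ s.IsStarIdeal J}, IsChain (· ≤ ·) c → ∀ L ∈ c,
      ∃ U ∈ {J : Ideal R | J ≠ ⊤ ∧ s.IsStarIdeal J}, ∀ J ∈ c, J ≤ U := by
    intro c hcS hc L hL
    have hproper : sSup c < ⊤ :=
      CompleteLattice.IsCompactElement.directed_sSup_lt_of_lt Ideal.isCompactElement_top ⟨L, hL⟩
        hc.directedOn fun J hJ => (hcS hJ).1.lt_top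
    exact ⟨sSup c, ⟨hproper.ne,
      hft.isStarIdeal_sSup ⟨L, hL⟩ hc.directedOn fun J hJ => (hcS hJ).2⟩,
      fun J hJ => le_sSup hJ⟩
  obtain ⟨M, hNM, hM⟩ := zorn_le_nonempty₀ _ hub N ⟨hN, hNs⟩
  exact ⟨M, ⟨hM.prop.1, hM.prop.2, fun J hJ hJs hMJ => (hM.eq_of_le ⟨hJ, hJs⟩ hMJ).symm⟩, hNM⟩

theorem exists_isMaxStarIdeal_ge_of_isMaxTIdeal (hft : s.FiniteType) {N : Ideal R}
    (hN : IsMaxTIdeal N) : ∃ M, s.IsMaxStarIdeal M ∧ N ≤ M :=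
  hft.exists_isMaxStarIdeal_ge hN.1 (hft.isStarIdeal_of_isTIdeal hN.2.1)

theorem isMaxTIdeal_of_isTIdeal (hft : s.FiniteType) {M : Ideal R} (hM : s.IsMaxStarIdeal M)
    (hMt : IsTIdeal M) : IsMaxTIdeal M :=
  ⟨hM.1, hMt, fun J hJ hJt => hM.2.2 J hJ (hft.isStarIdeal_of_isTIdeal hJt)⟩

theorem isMaxTIdeal_of_isSuperPotent (hft : s.FiniteType) {M : Ideal R}
    (hM : s.IsSuperPotent M) : IsMaxTIdeal M := by
  obtain ⟨hMs, I, ⟨⟨-, hI, -⟩, hinv⟩, hIM⟩ := hM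
  exact hft.isMaxTIdeal_of_isTIdeal hMs
    (hMs.2.1.isTIdeal hI hIM fun J hJ hIJ _ => hinv J hJ hIJ)

theorem isTSuperRigid (hft : s.FiniteType) {I : Ideal R} (hI : s.IsSuperRigid I) :
    IsTSuperRigid I := by
  obtain ⟨⟨hI0, hIfg, M, ⟨hM, hIM⟩, hunique⟩, hinv⟩ := id hI
  have hMt : IsMaxTIdeal M := hft.isMaxTIdeal_of_isSuperPotent ⟨hM, I, hI, hIM⟩
  refine ⟨⟨hI0, hIfg, M, ⟨hMt, hIM⟩, ?_⟩, fun J hJ hIJ => hft.isTInvertible (hinv J hJ hIJ)⟩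
  rintro N ⟨hN, hIN⟩
  obtain ⟨P, hP, hNP⟩ := hft.exists_isMaxStarIdeal_ge_of_isMaxTIdeal hN
  obtain rfl : P = M := hunique P ⟨hP, hIN.trans hNP⟩
  exact hN.eq_of_le hMt hNP

theorem isTSuperPotent (hft : s.FiniteType) {M : Ideal R} (hM : s.IsSuperPotent M) :
    IsTSuperPotent M := by
  obtain ⟨I, hI, hIM⟩ := hM.2
  exact ⟨hft.isMaxTIdeal_of_isSuperPotent hM, I, hft.isTSuperRigid hI, hIM⟩

end FiniteType

end StarOp

/-- For a finite-type star operation `⋆`, every `⋆`-super potent maximal `⋆`-ideal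
is a `t`-super potent maximal `t`-ideal; consequently a `⋆`-super potent domain is `t`-super
potent. -/
theorem tSuperPotent_of_starSuperPotent {R : Type*} [CommRing R] [IsDomain R]
    (s : StarOp R) (hft : s.FiniteType) :
    (∀ M : Ideal R, s.IsSuperPotent M → IsTSuperPotent M) ∧
    (s.SuperPotentDomain → TSuperPotentDomain R) := by
  refine ⟨fun M hM => hft.isTSuperPotent hM, fun hR N hN => ?_⟩
  obtain ⟨M, hM, hNM⟩ := hft.exists_isMaxStarIdeal_ge_of_isMaxTIdeal hN
  have hMt : IsTSuperPotent M := hft.isTSuperPotent (hR M hM)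
  rwa [hN.eq_of_le hMt.1 hNM]
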